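/- arXiv:1502.01692 — 2 statements merged into one kernel-verified Lean document; each statement's English description precedes it below -/
import Mathlib

section
/- Let t > 0 and let ψ : (0, ∞) → ℝ be twice continuously differentiable. Define h : (0, ∞) → ℝ by h(r) = ψ((8/3) t r^{3/2}). Then h satisfies h''(r) + h'(r)/r = 8 t² r sinh(2 h(r)) for all r > 0 if and only if ψ satisfies the Painlevé III equation ψ''(ρ) + ψ'(ρ)/ρ = (1/2) sinh(2 ψ(ρ)) for all ρ > 0. -/
theorem stmt8 (t : ℝ) (ht : 0 < t) (ψ : ℝ → ℝ) (hψ : ContDiffOn ℝ 2 ψ (Set.Ioi 0))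
    (h : ℝ → ℝ) (hh : ∀ r : ℝ, h r = ψ (8 / 3 * t * r ^ ((3 : ℝ) / 2))) :
    (∀ r > (0 : ℝ), deriv (deriv h) r + deriv h r / r
        = 8 * t ^ 2 * r * Real.sinh (2 * h r)) ↔
      (∀ ρ > (0 : ℝ), deriv (deriv ψ) ρ + deriv ψ ρ / ρ
        = (1 / 2) * Real.sinh (2 * ψ ρ)) := by
  have hψ1 : ∀ x > (0:ℝ), HasDerivAt ψ (deriv ψ x) x := fun x hx =>
    ((hψ.differentiableOn (by norm_num)).differentiableAt (Ioi_mem_nhds hx)).hasDerivAt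
  have hd : ContDiffOn ℝ 1 (deriv ψ) (Set.Ioi 0) :=
    hψ.deriv_of_isOpen isOpen_Ioi (by norm_num)
  have hψ2 : ∀ x > (0:ℝ), HasDerivAt (deriv ψ) (deriv (deriv ψ) x) x := fun x hx =>
    ((hd.differentiableOn (by norm_num)).differentiableAt (Ioi_mem_nhds hx)).hasDerivAt
  have hpos : ∀ r > (0:ℝ), 0 < 8 / 3 * t * r ^ ((3 : ℝ) / 2) := fun r hr => by positivity
  have hρ : ∀ r > (0:ℝ), HasDerivAt (fun r : ℝ => 8 / 3 * t * r ^ ((3 : ℝ) / 2))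
      (4 * t * r ^ ((1:ℝ)/2)) r := fun r hr => by
    have := (Real.hasDerivAt_rpow_const (x := r) (p := (3:ℝ)/2) (Or.inl hr.ne')).const_mul
      (8 / 3 * t)
    refine this.congr_deriv ?_
    rw [show (3:ℝ)/2 - 1 = 1/2 by norm_num]; ring
  have hρ2 : ∀ r > (0:ℝ), HasDerivAt (fun r : ℝ => 4 * t * r ^ ((1 : ℝ) / 2))
      (2 * t * (r ^ ((1:ℝ)/2))⁻¹) r := fun r hr => by
    have := (Real.hasDerivAt_rpow_const (x := r) (p := (1:ℝ)/2) (Or.inl hr.ne')).const_mul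
      (4 * t)
    refine this.congr_deriv ?_
    rw [show (1:ℝ)/2 - 1 = -(1/2) by norm_num, Real.rpow_neg hr.le]; ring
  have hfun : h = fun r => ψ (8 / 3 * t * r ^ ((3 : ℝ) / 2)) := funext hh
  have h1 : ∀ r > (0:ℝ), deriv h r =
      deriv ψ (8 / 3 * t * r ^ ((3 : ℝ) / 2)) * (4 * t * r ^ ((1:ℝ)/2)) := fun r hr => by
    rw [hfun]
    exact ((hψ1 _ (hpos r hr)).comp r (hρ r hr)).deriv
  have h2 : ∀ r > (0:ℝ), deriv (deriv h) r =
      deriv (deriv ψ) (8 / 3 * t * r ^ ((3 : ℝ) / 2)) * (4 * t * r ^ ((1:ℝ)/2))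
        * (4 * t * r ^ ((1:ℝ)/2)) +
      deriv ψ (8 / 3 * t * r ^ ((3 : ℝ) / 2)) * (2 * t * (r ^ ((1:ℝ)/2))⁻¹) := fun r hr => by
    have e : deriv h =ᶠ[nhds r] fun r =>
      deriv ψ (8 / 3 * t * r ^ ((3 : ℝ) / 2)) * (4 * t * r ^ ((1:ℝ)/2)) := by
      filter_upwards [Ioi_mem_nhds hr] with x hx using h1 x hx
    rw [e.deriv_eq]
    exact (((hψ2 _ (hpos r hr)).comp r (hρ r hr)).mul (hρ2 r hr)).deriv
  have key : ∀ r > (0:ℝ), (deriv (deriv h) r + deriv h r / r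
        = 8 * t ^ 2 * r * Real.sinh (2 * h r)) ↔
      (deriv (deriv ψ) (8 / 3 * t * r ^ ((3 : ℝ) / 2))
        + deriv ψ (8 / 3 * t * r ^ ((3 : ℝ) / 2)) / (8 / 3 * t * r ^ ((3 : ℝ) / 2))
        = (1 / 2) * Real.sinh (2 * ψ (8 / 3 * t * r ^ ((3 : ℝ) / 2)))) := fun r hr => by
    rw [h2 r hr, h1 r hr, hh r]
    generalize deriv (deriv ψ) (8 / 3 * t * r ^ ((3 : ℝ) / 2)) = A
    generalize deriv ψ (8 / 3 * t * r ^ ((3 : ℝ) / 2)) = B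
    generalize Real.sinh (2 * ψ (8 / 3 * t * r ^ ((3 : ℝ) / 2))) = C
    have e3 : r ^ ((3:ℝ)/2) = r * r ^ ((1:ℝ)/2) := by
      rw [show (3:ℝ)/2 = 1 + 1/2 by norm_num, Real.rpow_add hr, Real.rpow_one]
    have es : r = r ^ ((1:ℝ)/2) * r ^ ((1:ℝ)/2) := by
      rw [← Real.rpow_add hr]; norm_num
    have hs : 0 < r ^ ((1:ℝ)/2) := by positivity
    rw [e3]
    generalize r ^ ((1:ℝ)/2) = s at *
    subst es
    have e : A * (4 * t * s) * (4 * t * s) + B * (2 * t * s⁻¹) + B * (4 * t * s) / (s * s)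
        - 8 * t ^ 2 * (s * s) * C
        = 16 * t ^ 2 * s ^ 2 * (A + B / (8 / 3 * t * (s * s * s)) - 1 / 2 * C) := by
      field_simp
      ring
    rw [← sub_eq_zero, e, ← sub_eq_zero (b := 1 / 2 * C)]
    have : 16 * t ^ 2 * s ^ 2 ≠ 0 := by positivity
    simp only [mul_eq_zero, this, false_or]
  constructor
  · intro H ρ hρ0
    have hq : 0 < ρ / (8 / 3 * t) := by positivity
    have hr : 0 < (ρ / (8 / 3 * t)) ^ ((2:ℝ)/3) := by positivity
    have := (key _ hr).1 (H _ hr)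
    rw [← Real.rpow_mul hq.le, show (2:ℝ)/3 * (3/2) = 1 by norm_num, Real.rpow_one,
      mul_div_cancel₀ _ (by positivity)] at this
    exact this
  · intro H r hr
    exact (key r hr).2 (H _ (hpos r hr))
end

section
/- Let k ≥ 1 be an integer, t > 0, and let ψ : (0, ∞) → ℝ be twice continuously differentiable. Define h : (0, ∞) → ℝ by h(r) = ψ(4 t r^{k/2 + 1} / (k/2 + 1)). Then h satisfies h''(r) + h'(r)/r = 8 t² r^k sinh(2 h(r)) for all r > 0 if and only if ψ satisfies the Painlevé III equation ψ''(ρ) + ψ'(ρ)/ρ = (1/2) sinh(2 ψ(ρ)) for all ρ > 0. -/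
theorem stmt9 (k : ℕ) (hk : 1 ≤ k) (t : ℝ) (ht : 0 < t)
    (ψ : ℝ → ℝ) (hψ : ContDiffOn ℝ 2 ψ (Set.Ioi 0))
    (h : ℝ → ℝ)
    (hh : ∀ r : ℝ, h r = ψ (4 * t * r ^ ((k : ℝ) / 2 + 1) / ((k : ℝ) / 2 + 1))) :
    (∀ r > (0 : ℝ), deriv (deriv h) r + deriv h r / r
        = 8 * t ^ 2 * r ^ k * Real.sinh (2 * h r)) ↔
      (∀ ρ > (0 : ℝ), deriv (deriv ψ) ρ + deriv ψ ρ / ρ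
        = (1 / 2) * Real.sinh (2 * ψ ρ)) := by
  have ha : (0 : ℝ) < (k : ℝ) / 2 + 1 := by positivity
  have d1 : ∀ x > (0 : ℝ), HasDerivAt ψ (deriv ψ x) x := fun x hx =>
    ((hψ.differentiableOn (by norm_num)).differentiableAt (Ioi_mem_nhds hx)).hasDerivAt
  have c1 : ContDiffOn ℝ 1 (deriv ψ) (Set.Ioi 0) :=
    hψ.deriv_of_isOpen isOpen_Ioi (by norm_num)
  have d2 : ∀ x > (0 : ℝ), HasDerivAt (deriv ψ) (deriv (deriv ψ) x) x := fun x hx =>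
    ((c1.differentiableOn (by norm_num)).differentiableAt (Ioi_mem_nhds hx)).hasDerivAt
  obtain ⟨g, hg⟩ : ∃ g : ℝ → ℝ,
      g = fun r => 4 * t * r ^ ((k : ℝ) / 2 + 1) / ((k : ℝ) / 2 + 1) := ⟨_, rfl⟩
  have hhg : h = fun r => ψ (g r) := by
    funext r; rw [hh, hg]
  have gpos : ∀ r > (0 : ℝ), 0 < g r := fun r hr => by
    rw [hg]; have := Real.rpow_pos_of_pos hr ((k : ℝ) / 2 + 1); positivity
  have dg : ∀ r > (0 : ℝ), HasDerivAt g (4 * t * r ^ ((k : ℝ) / 2)) r := fun r hr => by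
    have := ((Real.hasDerivAt_rpow_const (p := (k : ℝ) / 2 + 1) (Or.inl hr.ne')).const_mul
      (4 * t)).div_const ((k : ℝ) / 2 + 1)
    rw [hg]
    refine this.congr_deriv ?_
    rw [add_sub_cancel_right]
    field_simp
  have dh : ∀ r > (0 : ℝ), HasDerivAt h (deriv ψ (g r) * (4 * t * r ^ ((k : ℝ) / 2))) r :=
    fun r hr => by
      rw [hhg]; exact (d1 _ (gpos r hr)).comp r (dg r hr)
  have ddh : ∀ r > (0 : ℝ), deriv (deriv h) r =
      deriv (deriv ψ) (g r) * (4 * t * r ^ ((k : ℝ) / 2)) * (4 * t * r ^ ((k : ℝ) / 2))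
        + deriv ψ (g r) * (4 * t * ((k : ℝ) / 2 * r ^ ((k : ℝ) / 2 - 1))) := fun r hr => by
    have e : deriv h =ᶠ[nhds r] fun r => deriv ψ (g r) * (4 * t * r ^ ((k : ℝ) / 2)) := by
      filter_upwards [Ioi_mem_nhds hr] with x hx using (dh x hx).deriv
    rw [e.deriv_eq]
    exact (((d2 _ (gpos r hr)).comp r (dg r hr)).mul
      ((Real.hasDerivAt_rpow_const (p := (k : ℝ) / 2) (Or.inl hr.ne')).const_mul (4 * t))).deriv
  have key : ∀ r > (0 : ℝ), (deriv (deriv h) r + deriv h r / r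
        = 8 * t ^ 2 * r ^ k * Real.sinh (2 * h r)) ↔
      (deriv (deriv ψ) (g r) + deriv ψ (g r) / g r
        = (1 / 2) * Real.sinh (2 * ψ (g r))) := fun r hr => by
    have hs := Real.rpow_pos_of_pos hr ((k : ℝ) / 2)
    have e1 : r ^ ((k : ℝ) / 2 - 1) = r ^ ((k : ℝ) / 2) / r := Real.rpow_sub_one hr.ne' _
    have e2 : r ^ k = (r ^ ((k : ℝ) / 2)) ^ 2 := by
      rw [← Real.rpow_natCast, ← Real.rpow_natCast, ← Real.rpow_mul hr.le]
      congr 1; push_cast; ring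
    have e3 : g r = 4 * t * (r ^ ((k : ℝ) / 2) * r) / ((k : ℝ) / 2 + 1) := by
      rw [hg, ← Real.rpow_add_one hr.ne']
    have hL : deriv (deriv h) r + deriv h r / r = 16 * t ^ 2 * r ^ k *
        (deriv (deriv ψ) (g r) + deriv ψ (g r) / g r) := by
      rw [ddh r hr, (dh r hr).deriv, e1, e2]
      generalize deriv (deriv ψ) (g r) = A
      generalize deriv ψ (g r) = B
      rw [e3]
      generalize r ^ ((k : ℝ) / 2) = s at *
      field_simp
      ring
    have hR : 8 * t ^ 2 * r ^ k * Real.sinh (2 * h r) =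
        16 * t ^ 2 * r ^ k * ((1 / 2) * Real.sinh (2 * ψ (g r))) := by
      rw [hhg]; ring
    rw [hL, hR]
    exact mul_right_inj' (by positivity)
  constructor
  · intro H ρ hρ
    have hb : 0 < ρ * ((k : ℝ) / 2 + 1) / (4 * t) := by positivity
    have hr := Real.rpow_pos_of_pos hb (((k : ℝ) / 2 + 1)⁻¹)
    have hgr : g ((ρ * ((k : ℝ) / 2 + 1) / (4 * t)) ^ (((k : ℝ) / 2 + 1)⁻¹)) = ρ := by
      rw [hg]
      simp only
      rw [Real.rpow_inv_rpow hb.le ha.ne']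
      field_simp
    have := (key _ hr).1 (H _ hr)
    rwa [hgr] at this
  · intro H r hr
    exact (key r hr).2 (H _ (gpos r hr))
end
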